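/- For all real numbers D > 0 and g > 0, the symmetric 4×4 real matrix H with rows [−2(1/3+D), −(1/3+D), 2D, D], [−(1/3+D), −2(1/3+D), D, 2D], [2D, D, −2(8g/3+D), −(8g/3+D)], [D, 2D, −(8g/3+D), −2(8g/3+D)] is negative definite. -/

import Mathlib

open Matrix

/-- The Hessian matrix `H` arising in the second-moment analysis, with `D = 3/C(s)`
and `g = kγ`. -/
noncomputable def H (D g : ℝ) : Matrix (Fin 4) (Fin 4) ℝ :=
  !![-2*(1/3+D), -(1/3+D),    2*D,             D;
     -(1/3+D),   -2*(1/3+D),  D,               2*D;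
     2*D,        D,           -2*(8*g/3+D),    -(8*g/3+D);
     D,          2*D,         -(8*g/3+D),      -2*(8*g/3+D)]

/-!
The variables fall into the two blocks `ω = (x₀, x₁)` and `λ = (x₂, x₃)`, and all four `2 × 2`
blocks of `H` are multiples of `1 + J`, with `J` the all-ones matrix. Hence `-H` is the Kronecker
product of the matrix of block coefficients, `diag (1/3, 8g/3) + D (1, -1)ᵀ (1, -1)`, with `1 + J`.
Both factors are a positive diagonal matrix plus a nonnegative multiple of a rank-one square, hence
positive definite, and therefore so is their Kronecker product.
-/

open scoped Kronecker

section General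

variable {n R : Type*}

theorem star_dotProduct_mulVec_neg_of_posDef_neg [Fintype n] [Ring R] [PartialOrder R]
    [IsOrderedAddMonoid R] [StarRing R] {M : Matrix n n R} (hM : (-M).PosDef) {x : n → R}
    (hx : x ≠ 0) : star x ⬝ᵥ (M *ᵥ x) < 0 := by
  have hpos : 0 < star x ⬝ᵥ (-M *ᵥ x) := hM.dotProduct_mulVec_pos hx
  rwa [neg_mulVec, dotProduct_neg, neg_pos] at hpos

theorem posDef_diagonal_add_smul_vecMulVec_self_star [Finite n] [DecidableEq n] [CommRing R]
    [PartialOrder R] [StarRing R] [StarOrderedRing R] [NoZeroDivisors R] {d : n → R}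
    (hd : ∀ i, 0 < d i) {c : R} (hc : 0 ≤ c) (v : n → R) :
    (diagonal d + c • vecMulVec v (star v)).PosDef :=
  (PosDef.diagonal hd).add_posSemidef ((posSemidef_vecMulVec_self_star v).smul hc)

end General

theorem H_eq_neg_submatrix_kronecker (D g : ℝ) :
    H D g = -((diagonal ![1 / 3, 8 * g / 3] + D • vecMulVec ![1, -1] (star ![1, -1])) ⊗ₖ
      (diagonal 1 + (1 : ℝ) • vecMulVec 1 (star 1))).submatrix
        (finProdFinEquiv (m := 2) (n := 2)).symm finProdFinEquiv.symm := by
  ext i j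
  fin_cases i <;> fin_cases j <;>
    simp [H, finProdFinEquiv, Fin.divNat, Fin.modNat] <;> ring

theorem posDef_neg_H {D g : ℝ} (hD : 0 ≤ D) (hg : 0 < g) : (-H D g).PosDef := by
  have hweights : ∀ i, 0 < ![1 / 3, 8 * g / 3] i := by
    simp [Fin.forall_fin_two, hg]
  have hcoeff : (diagonal ![1 / 3, 8 * g / 3] +
      D • vecMulVec ![1, -1] (star ![1, -1])).PosDef :=
    posDef_diagonal_add_smul_vecMulVec_self_star hweights hD _
  have hones : (diagonal 1 + (1 : ℝ) • vecMulVec (1 : Fin 2 → ℝ) (star 1)).PosDef :=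
    posDef_diagonal_add_smul_vecMulVec_self_star (fun _ ↦ zero_lt_one) zero_le_one _
  rw [H_eq_neg_submatrix_kronecker, neg_neg]
  exact (hcoeff.kronecker hones).submatrix finProdFinEquiv.symm.injective

/-- The matrix `H` is negative definite: it is symmetric and `xᵀ H x < 0` for every
nonzero vector `x`. -/
theorem stmt13 (D g : ℝ) (hD : 0 < D) (hg : 0 < g) :
    (H D g).IsHermitian ∧
    ∀ x : Fin 4 → ℝ, x ≠ 0 → x ⬝ᵥ ((H D g) *ᵥ x) < 0 := by
  have h : (-H D g).PosDef := posDef_neg_H hD.le hg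
  refine ⟨?_, fun x hx ↦ ?_⟩
  · simpa using h.isHermitian.neg
  · simpa using star_dotProduct_mulVec_neg_of_posDef_neg h hx
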